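/- Let (s₁, m₁) and (s₂, m₂) be elements of α × Option Bool such that m₁ = some false → ¬P s₁ and m₂ = some false → ¬P s₂, and let (s, m) := contract (s₁, m₁) (s₂, m₂). Then: (A₁) if (m ≠ some true → P s) then (m₁ ≠ some true → P s₁); (A₂) if (m ≠ some true → P s) then (m₂ ≠ some true → P s₂); and (B) if m = some false then ¬P s. -/

import Mathlib

/-!
The proof follows the three branches of `contract`. Whenever a pair is dropped, one of three things
holds: its marker is `some true`, so nothing is claimed of it; its term satisfies `P`; or the
returned term is a counterexample marked `some false`, so the premise of both transfer claims fails.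
A marker `some false` in the result is either inherited from an argument or comes from the explicit
test of `P s₁`.
-/

/-- The marked contraction operator of the Dialectica interpretation with
counterexample marking. Markers: `some true` ~ tt, `some false` ~ ff, `none` ~ ⊥. -/
def contract {α : Type*} (P : α → Prop) [DecidablePred P] :
    α × Option Bool → α × Option Bool → α × Option Bool :=
  fun t₁ t₂ =>
    if t₂.2 = some true ∨ t₁.2 = some false then t₁
    else if t₁.2 = some true ∨ t₂.2 = some false ∨ P t₁.1 then t₂
    else (t₁.1, some false)

theorem marked_contract_sound {α : Type*} (P : α → Prop) [DecidablePred P]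
    (s₁ s₂ : α) (m₁ m₂ : Option Bool)
    (h₁ : m₁ = some false → ¬ P s₁) (h₂ : m₂ = some false → ¬ P s₂) :
    (((contract P (s₁, m₁) (s₂, m₂)).2 ≠ some true →
        P (contract P (s₁, m₁) (s₂, m₂)).1) → (m₁ ≠ some true → P s₁)) ∧
    (((contract P (s₁, m₁) (s₂, m₂)).2 ≠ some true →
        P (contract P (s₁, m₁) (s₂, m₂)).1) → (m₂ ≠ some true → P s₂)) ∧
    ((contract P (s₁, m₁) (s₂, m₂)).2 = some false →
        ¬ P (contract P (s₁, m₁) (s₂, m₂)).1) := by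
  by_cases hfst : m₂ = some true ∨ m₁ = some false
  -- The first pair is returned: either the second is discarded, or `s₁` is a counterexample.
  · have hc : contract P (s₁, m₁) (s₂, m₂) = (s₁, m₁) := by simp [contract, hfst]
    rw [hc]
    grind
  by_cases hsnd : m₁ = some true ∨ m₂ = some false ∨ P s₁
  -- The second pair is returned: the first is discarded, or `s₂` is a counterexample, or `P s₁`.
  · have hc : contract P (s₁, m₁) (s₂, m₂) = (s₂, m₂) := by simp [contract, hfst, hsnd]
    rw [hc]
    grind
  -- Otherwise `¬ P s₁` was just decided, so the new marker `some false` on `s₁` is justified.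
  · have hc : contract P (s₁, m₁) (s₂, m₂) = (s₁, some false) := by simp [contract, hfst, hsnd]
    rw [hc]
    grind
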